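/- Let X and Y be standard Borel spaces and let P and Q be probability measures on X × Y with M = (1/2)(P + Q). Denote by P_Y, Q_Y the marginals on Y, and by P(·|y), Q(·|y) the conditional distributions on X given y. Then the Jensen–Shannon divergence satisfies D_JS(P‖Q) ≤ D_JS(P_Y‖Q_Y) + ∫_Y D_JS(P(·|y)‖Q(·|y)) dP_Y(y) + ∫_Y D_JS(P(·|y)‖Q(·|y)) dQ_Y(y). -/

import Mathlib

open MeasureTheory ProbabilityTheory
open scoped ENNReal Classical

/-- Kullback–Leibler divergence between two measures, with values in `[0, ∞]`. -/
noncomputable def klDiv {Z : Type*} [MeasurableSpace Z] (μ ν : Measure Z) : ℝ≥0∞ :=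
  if μ ≪ ν ∧ Integrable (llr μ ν) μ then ENNReal.ofReal (∫ z, llr μ ν z ∂μ) else ⊤

/-- Jensen–Shannon divergence: `D_JS(P‖Q) = (1/2)[D_KL(P‖M) + D_KL(Q‖M)]`
where `M = (1/2)(P + Q)`. -/
noncomputable def jsDiv {Z : Type*} [MeasurableSpace Z] (μ ν : Measure Z) : ℝ≥0∞ :=
  (klDiv μ ((2 : ℝ≥0∞)⁻¹ • (μ + ν)) + klDiv ν ((2 : ℝ≥0∞)⁻¹ • (μ + ν))) / 2

/-!
The midpoint `M` of `P` and `Q` minimises `N ↦ D_KL(P‖N) + D_KL(Q‖N)`: by the parallelogram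
identity this sum exceeds its value at `M` by `2 D_KL(M‖N)`. The conditionals of `M` are rarely the
midpoints of `P(·|y)` and `Q(·|y)`, but the measure `N` with marginal `(P_Y + Q_Y) / 2` and
conditionals `(P(·|y) + Q(·|y)) / 2` is an admissible competitor, and for it the Kullback–Leibler
chain rule splits both divergences into a marginal and a conditional part. Each half
`D_KL(P(·|y)‖N(·|y)) / 2` is at most the Jensen–Shannon divergence of the conditionals.
-/

section Mixture

variable {Z W : Type*} [MeasurableSpace Z] [MeasurableSpace W]

/-- The equal-weight mixture `(μ + ν) / 2`, the reference measure of the Jensen–Shannon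
divergence. -/
noncomputable def mixture (μ ν : Measure Z) : Measure Z := (2 : ℝ≥0∞)⁻¹ • (μ + ν)

lemma mixture_apply_of_eq {μ ν : Measure Z} {s : Set Z} (h : μ s = ν s) : mixture μ ν s = μ s := by
  rw [mixture, Measure.smul_apply, Measure.add_apply, ← h, ← two_mul, smul_eq_mul, ← mul_assoc,
    ENNReal.inv_mul_cancel two_ne_zero ENNReal.ofNat_ne_top, one_mul]

instance (μ ν : Measure Z) [IsFiniteMeasure μ] [IsFiniteMeasure ν] :
    IsFiniteMeasure (mixture μ ν) :=
  (μ + ν).smul_finite (by simp)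

instance (μ ν : Measure Z) [IsProbabilityMeasure μ] [IsProbabilityMeasure ν] :
    IsProbabilityMeasure (mixture μ ν) :=
  ⟨by rw [mixture_apply_of_eq (by simp), measure_univ]⟩

lemma mixture_absolutelyContinuous_iff {μ ν ρ : Measure Z} :
    mixture μ ν ≪ ρ ↔ μ ≪ ρ ∧ ν ≪ ρ := by
  rw [← Measure.AbsolutelyContinuous.add_left_iff, mixture]
  exact ⟨(Measure.absolutelyContinuous_smul (by simp)).trans, fun h ↦ h.smul_left _⟩

lemma absolutelyContinuous_mixture_left (μ ν : Measure Z) : μ ≪ mixture μ ν :=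
  (mixture_absolutelyContinuous_iff.1 Measure.AbsolutelyContinuous.rfl).1

lemma absolutelyContinuous_mixture_right (μ ν : Measure Z) : ν ≪ mixture μ ν :=
  (mixture_absolutelyContinuous_iff.1 Measure.AbsolutelyContinuous.rfl).2

lemma map_mixture (μ ν : Measure Z) {f : Z → W} (hf : Measurable f) :
    (mixture μ ν).map f = mixture (μ.map f) (ν.map f) := by
  rw [mixture, Measure.map_smul, Measure.map_add _ _ hf, mixture]

lemma rnDeriv_add_rnDeriv_eq_two_mul_rnDeriv_mixture (μ ν ρ : Measure Z) [IsFiniteMeasure μ]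
    [IsFiniteMeasure ν] [SigmaFinite ρ] :
    ∀ᵐ z ∂ρ, μ.rnDeriv ρ z + ν.rnDeriv ρ z = 2 * (mixture μ ν).rnDeriv ρ z := by
  filter_upwards [Measure.rnDeriv_add μ ν ρ,
    Measure.rnDeriv_smul_left_of_ne_top (μ + ν) ρ (r := (2 : ℝ≥0∞)⁻¹) (by simp)] with z hadd hsmul
  rw [mixture, hsmul, Pi.smul_apply, hadd, Pi.add_apply, smul_eq_mul, ← mul_assoc,
    ENNReal.mul_inv_cancel two_ne_zero ENNReal.ofNat_ne_top, one_mul]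

/-- The pointwise equal-weight mixture of two kernels, the conditional distribution of the
measure compared with the mixture of two composition-products. -/
noncomputable def kernelMixture (κ η : Kernel Z W) : Kernel Z W where
  toFun z := mixture (κ z) (η z)
  measurable' := by
    refine Measure.measurable_of_measurable_coe _ fun s hs ↦ ?_
    simp only [mixture, Measure.smul_apply, Measure.add_apply, smul_eq_mul]
    exact ((κ.measurable_coe hs).add (η.measurable_coe hs)).const_mul _

lemma kernelMixture_apply (κ η : Kernel Z W) (z : Z) :
    kernelMixture κ η z = mixture (κ z) (η z) := rfl

instance (κ η : Kernel Z W) [IsMarkovKernel κ] [IsMarkovKernel η] :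
    IsMarkovKernel (kernelMixture κ η) :=
  ⟨fun z ↦ inferInstanceAs (IsProbabilityMeasure (mixture (κ z) (η z)))⟩

end Mixture

section KullbackLeibler

open InformationTheory (klFun klFun_apply klFun_nonneg klDiv_of_not_ac
  klDiv_eq_lintegral_klFun_of_ac)

variable {X Y Z : Type*} [MeasurableSpace X] [MeasurableSpace Y] [MeasurableSpace Z]

lemma klFun_mul (x y : ℝ) :
    klFun (x * y) = y * klFun x + x * klFun y + (1 - x) * (1 - y) := by
  have := Real.negMulLog_mul x y
  simp only [Real.negMulLog, klFun_apply] at this ⊢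
  linear_combination -this

lemma klFun_mul_add_klFun_mul {x y m : ℝ} (h : (x + y) * m = 2 * m) :
    klFun (x * m) + klFun (y * m) = m * (klFun x + klFun y) + 2 * klFun m := by
  rw [klFun_mul, klFun_mul, klFun_apply m]
  linear_combination Real.log m * h

lemma ofReal_klFun_mul_add_ofReal_klFun_mul {x y m : ℝ≥0∞} (hm : m ≠ ∞)
    (h : (x + y) * m = 2 * m) :
    ENNReal.ofReal (klFun (x * m).toReal) + ENNReal.ofReal (klFun (y * m).toReal)
      = m * (ENNReal.ofReal (klFun x.toReal) + ENNReal.ofReal (klFun y.toReal))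
        + 2 * ENNReal.ofReal (klFun m.toReal) := by
  have hfinite : x * m ≠ ∞ ∧ y * m ≠ ∞ := by
    rw [← ENNReal.add_ne_top, ← add_mul, h]
    exact ENNReal.mul_ne_top ENNReal.ofNat_ne_top hm
  have hreal : (x.toReal + y.toReal) * m.toReal = 2 * m.toReal := by
    simpa [add_mul, ENNReal.toReal_add hfinite.1 hfinite.2] using congrArg ENNReal.toReal h
  have hnonneg (t : ℝ≥0∞) : 0 ≤ klFun t.toReal := klFun_nonneg ENNReal.toReal_nonneg
  have hsum := add_nonneg (hnonneg x) (hnonneg y)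
  rw [← ENNReal.ofReal_add (hnonneg _) (hnonneg _), ← ENNReal.ofReal_add (hnonneg _) (hnonneg _),
    ENNReal.toReal_mul, ENNReal.toReal_mul, klFun_mul_add_klFun_mul hreal,
    ENNReal.ofReal_add (mul_nonneg ENNReal.toReal_nonneg hsum) (mul_nonneg zero_le_two (hnonneg m)),
    ENNReal.ofReal_mul ENNReal.toReal_nonneg, ENNReal.ofReal_toReal hm,
    ENNReal.ofReal_mul zero_le_two, ENNReal.ofReal_ofNat]

lemma klDiv_add_klDiv_eq_klDiv_mixture_add (μ ν ρ : Measure Z) [IsFiniteMeasure μ]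
    [IsFiniteMeasure ν] [IsFiniteMeasure ρ] :
    InformationTheory.klDiv μ ρ + InformationTheory.klDiv ν ρ
      = InformationTheory.klDiv μ (mixture μ ν) + InformationTheory.klDiv ν (mixture μ ν)
        + 2 * InformationTheory.klDiv (mixture μ ν) ρ := by
  by_cases hmix : mixture μ ν ≪ ρ
  swap
  · rw [klDiv_of_not_ac hmix, ENNReal.mul_top two_ne_zero, add_top, ENNReal.add_eq_top]
    rw [mixture_absolutelyContinuous_iff, not_and_or] at hmix
    exact hmix.imp klDiv_of_not_ac klDiv_of_not_ac
  have hμ := absolutelyContinuous_mixture_left μ ν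
  have hν := absolutelyContinuous_mixture_right μ ν
  rw [klDiv_eq_lintegral_klFun_of_ac (hμ.trans hmix),
    klDiv_eq_lintegral_klFun_of_ac (hν.trans hmix), klDiv_eq_lintegral_klFun_of_ac hμ,
    klDiv_eq_lintegral_klFun_of_ac hν, klDiv_eq_lintegral_klFun_of_ac hmix,
    ← lintegral_add_left (by fun_prop), ← lintegral_add_left (by fun_prop),
    ← lintegral_rnDeriv_mul hmix (by fun_prop), ← lintegral_const_mul _ (by fun_prop),
    ← lintegral_add_left (by fun_prop)]
  refine lintegral_congr_ae ?_
  filter_upwards [rnDeriv_add_rnDeriv_eq_two_mul_rnDeriv_mixture μ ν ρ,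
    Measure.rnDeriv_mul_rnDeriv (κ := ρ) hμ, Measure.rnDeriv_mul_rnDeriv (κ := ρ) hν,
    Measure.rnDeriv_ne_top (mixture μ ν) ρ] with z hsum hμz hνz hm
  rw [Pi.mul_apply] at hμz hνz
  rw [← hμz, ← hνz] at hsum ⊢
  exact ofReal_klFun_mul_add_ofReal_klFun_mul hm (by rw [add_mul, hsum])

lemma klDiv_mixture_add_klDiv_mixture_le (μ ν ρ : Measure Z) [IsFiniteMeasure μ]
    [IsFiniteMeasure ν] [IsFiniteMeasure ρ] :
    InformationTheory.klDiv μ (mixture μ ν) + InformationTheory.klDiv ν (mixture μ ν)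
      ≤ InformationTheory.klDiv μ ρ + InformationTheory.klDiv ν ρ :=
  le_self_add.trans_eq (klDiv_add_klDiv_eq_klDiv_mixture_add μ ν ρ).symm

section CompProd

variable [MeasurableSpace.CountableOrCountablyGenerated Y X] (μ : Measure Y) (κ η : Kernel Y X)

lemma rnDeriv_compProd_right [IsFiniteMeasure μ] [IsFiniteKernel κ] [IsFiniteKernel η]
    (h : ∀ᵐ y ∂μ, κ y ≪ η y) :
    (μ ⊗ₘ κ).rnDeriv (μ ⊗ₘ η) =ᵐ[μ ⊗ₘ η] fun p ↦ κ.rnDeriv η p.1 p.2 := by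
  have hκ : η.withDensity (κ.rnDeriv η) =ᵐ[μ] κ :=
    h.mono fun _ hy ↦ Kernel.withDensity_rnDeriv_eq hy
  have hmeas : Measurable fun p : Y × X ↦ κ.rnDeriv η p.1 p.2 := Kernel.measurable_rnDeriv κ η
  rw [← Measure.compProd_congr hκ, Measure.compProd_withDensity hmeas]
  exact Measure.rnDeriv_withDensity _ hmeas

lemma klDiv_compProd_right_of_ac [IsFiniteMeasure μ] [IsFiniteKernel κ] [IsFiniteKernel η]
    (h : ∀ᵐ y ∂μ, κ y ≪ η y) :
    InformationTheory.klDiv (μ ⊗ₘ κ) (μ ⊗ₘ η) = ∫⁻ y, InformationTheory.klDiv (κ y) (η y) ∂μ := by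
  have klDiv_apply (y : Y) (hy : κ y ≪ η y) : InformationTheory.klDiv (κ y) (η y)
      = ∫⁻ x, ENNReal.ofReal (klFun (κ.rnDeriv η y x).toReal) ∂(η y) := by
    rw [klDiv_eq_lintegral_klFun_of_ac hy]
    refine lintegral_congr_ae ?_
    filter_upwards [κ.rnDeriv_eq_rnDeriv_measure] with x hx
    rw [hx]
  calc InformationTheory.klDiv (μ ⊗ₘ κ) (μ ⊗ₘ η)
  _ = ∫⁻ p, ENNReal.ofReal (klFun ((μ ⊗ₘ κ).rnDeriv (μ ⊗ₘ η) p).toReal) ∂(μ ⊗ₘ η) :=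
    klDiv_eq_lintegral_klFun_of_ac (Measure.AbsolutelyContinuous.compProd_right h)
  _ = ∫⁻ p, ENNReal.ofReal (klFun (κ.rnDeriv η p.1 p.2).toReal) ∂(μ ⊗ₘ η) :=
    lintegral_congr_ae <| (rnDeriv_compProd_right μ κ η h).mono fun p hp ↦ by simp only [hp]
  _ = ∫⁻ y, ∫⁻ x, ENNReal.ofReal (klFun (κ.rnDeriv η y x).toReal) ∂(η y) ∂μ :=
    Measure.lintegral_compProd (by fun_prop)
  _ = ∫⁻ y, InformationTheory.klDiv (κ y) (η y) ∂μ :=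
    lintegral_congr_ae <| h.mono fun y hy ↦ (klDiv_apply y hy).symm

lemma lintegral_klDiv_of_not_ac [IsFiniteKernel κ] [IsFiniteKernel η]
    (h : ¬ ∀ᵐ y ∂μ, κ y ≪ η y) :
    ∫⁻ y, InformationTheory.klDiv (κ y) (η y) ∂μ = ∞ := by
  refine eq_top_iff.2 ?_
  calc ∞ = ∫⁻ _ in {y | κ y ≪ η y}ᶜ, ∞ ∂μ := by
        rw [setLIntegral_const, ENNReal.top_mul]
        exact mt ae_iff.2 h
  _ = ∫⁻ y in {y | κ y ≪ η y}ᶜ, InformationTheory.klDiv (κ y) (η y) ∂μ :=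
    setLIntegral_congr_fun (Kernel.measurableSet_absolutelyContinuous κ η).compl
      fun y hy ↦ (klDiv_of_not_ac hy).symm
  _ ≤ ∫⁻ y, InformationTheory.klDiv (κ y) (η y) ∂μ := setLIntegral_le_lintegral _ _

lemma klDiv_compProd_right [IsFiniteMeasure μ] [IsFiniteKernel κ] [IsFiniteKernel η] :
    InformationTheory.klDiv (μ ⊗ₘ κ) (μ ⊗ₘ η) = ∫⁻ y, InformationTheory.klDiv (κ y) (η y) ∂μ := by
  by_cases h : ∀ᵐ y ∂μ, κ y ≪ η y
  · exact klDiv_compProd_right_of_ac μ κ η h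
  · rw [klDiv_of_not_ac (Measure.absolutelyContinuous_compProd_right_iff.not.2 h),
      lintegral_klDiv_of_not_ac μ κ η h]

lemma klDiv_compProd_eq_add_lintegral (ν : Measure Y) [IsFiniteMeasure μ] [IsFiniteMeasure ν]
    [IsMarkovKernel κ] [IsMarkovKernel η] :
    InformationTheory.klDiv (μ ⊗ₘ κ) (ν ⊗ₘ η)
      = InformationTheory.klDiv μ ν + ∫⁻ y, InformationTheory.klDiv (κ y) (η y) ∂μ := by
  rw [InformationTheory.klDiv_compProd_eq_add, klDiv_compProd_right]

end CompProd

end KullbackLeibler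

section JensenShannon

variable {X Y Z W : Type*} [MeasurableSpace X] [MeasurableSpace Y] [MeasurableSpace Z]
  [MeasurableSpace W]

lemma klDiv_eq_informationTheory_klDiv {μ ν : Measure Z} (h : μ Set.univ = ν Set.univ) :
    klDiv μ ν = InformationTheory.klDiv μ ν := by
  rw [klDiv, InformationTheory.klDiv_def]
  simp [measureReal_def, h]

lemma jsDiv_eq_klDiv_mixture {μ ν : Measure Z} (h : μ Set.univ = ν Set.univ) :
    jsDiv μ ν = (InformationTheory.klDiv μ (mixture μ ν)
      + InformationTheory.klDiv ν (mixture μ ν)) / 2 := by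
  have hmix := mixture_apply_of_eq h
  rw [← klDiv_eq_informationTheory_klDiv hmix.symm,
    ← klDiv_eq_informationTheory_klDiv (h.symm.trans hmix.symm), jsDiv, mixture]

lemma klDiv_mixture_left_div_two_le_jsDiv {μ ν : Measure Z} (h : μ Set.univ = ν Set.univ) :
    InformationTheory.klDiv μ (mixture μ ν) / 2 ≤ jsDiv μ ν := by
  rw [jsDiv_eq_klDiv_mixture h]
  gcongr
  exact le_self_add

lemma klDiv_mixture_right_div_two_le_jsDiv {μ ν : Measure Z} (h : μ Set.univ = ν Set.univ) :
    InformationTheory.klDiv ν (mixture μ ν) / 2 ≤ jsDiv μ ν := by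
  rw [jsDiv_eq_klDiv_mixture h]
  gcongr
  exact le_add_self

lemma jsDiv_map_le {μ ν : Measure Z} [IsFiniteMeasure μ] [IsFiniteMeasure ν]
    (h : μ Set.univ = ν Set.univ) {f : Z → W} (hf : Measurable f) :
    jsDiv (μ.map f) (ν.map f) ≤ jsDiv μ ν := by
  have hmap : μ.map f Set.univ = ν.map f Set.univ := by simpa [Measure.map_apply hf] using h
  rw [jsDiv_eq_klDiv_mixture h, jsDiv_eq_klDiv_mixture hmap, ← map_mixture μ ν hf]
  gcongr <;> exact InformationTheory.klDiv_map_le _ _ hf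

section CompProd

variable [MeasurableSpace.CountableOrCountablyGenerated Y X] {μ ν : Measure Y} [IsFiniteMeasure μ]
  [IsFiniteMeasure ν] {κ η : Kernel Y X} [IsMarkovKernel κ] [IsMarkovKernel η]

lemma jsDiv_compProd_le_jsDiv_add_lintegral_klDiv (h : μ Set.univ = ν Set.univ) :
    jsDiv (μ ⊗ₘ κ) (ν ⊗ₘ η) ≤ jsDiv μ ν
      + ((∫⁻ y, InformationTheory.klDiv (κ y) (mixture (κ y) (η y)) ∂μ) / 2
      + (∫⁻ y, InformationTheory.klDiv (η y) (mixture (κ y) (η y)) ∂ν) / 2) := by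
  have hcomp : (μ ⊗ₘ κ) Set.univ = (ν ⊗ₘ η) Set.univ := by simpa using h
  rw [jsDiv_eq_klDiv_mixture hcomp, jsDiv_eq_klDiv_mixture h, ← ENNReal.add_div, ← ENNReal.add_div]
  refine ENNReal.div_le_div_right ?_ 2
  refine (klDiv_mixture_add_klDiv_mixture_le (μ ⊗ₘ κ) (ν ⊗ₘ η)
    (mixture μ ν ⊗ₘ kernelMixture κ η)).trans_eq ?_
  simp only [klDiv_compProd_eq_add_lintegral, kernelMixture_apply]
  rw [add_add_add_comm]

lemma jsDiv_compProd_le (h : μ Set.univ = ν Set.univ) :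
    jsDiv (μ ⊗ₘ κ) (ν ⊗ₘ η)
      ≤ jsDiv μ ν + ∫⁻ y, jsDiv (κ y) (η y) ∂μ + ∫⁻ y, jsDiv (κ y) (η y) ∂ν := by
  rw [add_assoc]
  refine (jsDiv_compProd_le_jsDiv_add_lintegral_klDiv h).trans ?_
  have hmass (y : Y) : κ y Set.univ = η y Set.univ := by simp
  have lintegral_div_two (ρ : Measure Y) (f : Y → ℝ≥0∞) :
      (∫⁻ y, f y ∂ρ) / 2 = ∫⁻ y, f y / 2 ∂ρ := by
    simp only [div_eq_mul_inv]
    exact (lintegral_mul_const' _ _ (by simp)).symm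
  rw [lintegral_div_two, lintegral_div_two]
  gcongr with y y
  · exact klDiv_mixture_left_div_two_le_jsDiv (hmass y)
  · exact klDiv_mixture_right_div_two_le_jsDiv (hmass y)

end CompProd

lemma eq_map_swap_compProd_of_forall_prod {P : Measure (X × Y)} [IsFiniteMeasure P]
    {μ : Measure Y} [SFinite μ] {κ : Kernel Y X} [IsSFiniteKernel κ]
    (h : ∀ (A : Set X) (B : Set Y), MeasurableSet A → MeasurableSet B →
      P (A ×ˢ B) = ∫⁻ y in B, κ y A ∂μ) :
    P = (μ ⊗ₘ κ).map Prod.swap := by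
  refine Measure.ext_prod fun {A B} hA hB ↦ ?_
  rw [Measure.map_apply measurable_swap (hA.prod hB), Set.preimage_swap_prod,
    Measure.compProd_apply_prod hB hA, h A B hA hB]

theorem jsDiv_le_marginal_add_conditional_general
    [MeasurableSpace.CountableOrCountablyGenerated Y X]
    (P Q : Measure (X × Y)) [IsFiniteMeasure P] [IsFiniteMeasure Q]
    (hPQ : P Set.univ = Q Set.univ)
    (κP κQ : Kernel Y X) [IsMarkovKernel κP] [IsMarkovKernel κQ]
    (hκP : ∀ (A : Set X) (B : Set Y), MeasurableSet A → MeasurableSet B →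
      P (A ×ˢ B) = ∫⁻ y in B, κP y A ∂(P.map Prod.snd))
    (hκQ : ∀ (A : Set X) (B : Set Y), MeasurableSet A → MeasurableSet B →
      Q (A ×ˢ B) = ∫⁻ y in B, κQ y A ∂(Q.map Prod.snd)) :
    jsDiv P Q ≤
      jsDiv (P.map Prod.snd) (Q.map Prod.snd)
        + ∫⁻ y, jsDiv (κP y) (κQ y) ∂(P.map Prod.snd)
        + ∫⁻ y, jsDiv (κP y) (κQ y) ∂(Q.map Prod.snd) := by
  have hmarginal : P.map Prod.snd Set.univ = Q.map Prod.snd Set.univ := by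
    simpa [Measure.map_apply measurable_snd] using hPQ
  calc jsDiv P Q
  _ = jsDiv ((P.map Prod.snd ⊗ₘ κP).map Prod.swap) ((Q.map Prod.snd ⊗ₘ κQ).map Prod.swap) := by
    rw [← eq_map_swap_compProd_of_forall_prod hκP, ← eq_map_swap_compProd_of_forall_prod hκQ]
  _ ≤ jsDiv (P.map Prod.snd ⊗ₘ κP) (Q.map Prod.snd ⊗ₘ κQ) :=
    jsDiv_map_le (by simpa using hmarginal) measurable_swap
  _ ≤ _ := jsDiv_compProd_le hmarginal

end JensenShannon

/-- Decomposition of the joint Jensen–Shannon divergence: for probability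
measures `P`, `Q` on a product `X × Y` of standard Borel spaces, with
`Y`-marginals `P_Y`, `Q_Y` and conditional distributions (disintegrations)
`κP`, `κQ` of `X` given `y`,
`D_JS(P‖Q) ≤ D_JS(P_Y‖Q_Y) + E_{y∼P_Y} D_JS(P(·|y)‖Q(·|y))
  + E_{y∼Q_Y} D_JS(P(·|y)‖Q(·|y))`. -/
theorem jsDiv_le_marginal_add_conditional
    {X Y : Type*} [MeasurableSpace X] [MeasurableSpace Y]
    [StandardBorelSpace X] [StandardBorelSpace Y]
    (P Q : Measure (X × Y)) [IsProbabilityMeasure P] [IsProbabilityMeasure Q]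
    (κP κQ : Kernel Y X) [IsMarkovKernel κP] [IsMarkovKernel κQ]
    (hκP : ∀ (A : Set X) (B : Set Y), MeasurableSet A → MeasurableSet B →
      P (A ×ˢ B) = ∫⁻ y in B, κP y A ∂(P.map Prod.snd))
    (hκQ : ∀ (A : Set X) (B : Set Y), MeasurableSet A → MeasurableSet B →
      Q (A ×ˢ B) = ∫⁻ y in B, κQ y A ∂(Q.map Prod.snd)) :
    jsDiv P Q ≤
      jsDiv (P.map Prod.snd) (Q.map Prod.snd)
        + ∫⁻ y, jsDiv (κP y) (κQ y) ∂(P.map Prod.snd)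
        + ∫⁻ y, jsDiv (κP y) (κQ y) ∂(Q.map Prod.snd) := by
  exact jsDiv_le_marginal_add_conditional_general P Q (by simp) κP κQ hκP hκQ
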